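/- Poincaré–Koszul presentation of the reduced Adini 1-form space: Let curl f := (−∂_y f, ∂_x f), let A := {f ∈ ℝ[x,y] : deg f ≤ 3} + span{x³y, xy³}, and let Ã := {(p,q) ∈ ℝ[x,y]² : deg p ≤ 1 and deg q ≤ 1} + span{curl(x³), curl(y³), curl(x²y), curl(xy²), curl(x³y), curl(xy³)}. Then Ã = {curl φ : φ ∈ A} + span{(x, y)}, where (x,y) is the Koszul field κ(1) obtained by multiplying the constant 1 by the position vector. -/

import Mathlib

open MvPolynomial

noncomputable section

/-- Polynomials in two variables `x, y` over `ℝ`. -/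
abbrev M2 : Type := MvPolynomial (Fin 2) ℝ

def x : M2 := X 0
def y : M2 := X 1

/-- The 2D curl of a scalar polynomial: `curl f = (−∂_y f, ∂_x f)`. -/
def curl2 (f : M2) : Fin 2 → M2 := ![-(pderiv 1 f), pderiv 0 f]

/-- The 2D Adini 0-form shape space `A := P₃ + span{x³y, xy³}`. -/
def A0 : Submodule ℝ M2 :=
  restrictTotalDegree (Fin 2) ℝ 3 ⊔ Submodule.span ℝ {x ^ 3 * y, x * y ^ 3}

/-- The reduced Adini 1-form shape space
`Ã := [P₁]² + span{curl(x³), curl(y³), curl(x²y), curl(xy²), curl(x³y), curl(xy³)}`. -/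
def Atilde : Submodule ℝ (Fin 2 → M2) :=
  (Submodule.pi Set.univ fun _ => restrictTotalDegree (Fin 2) ℝ 1) ⊔
    Submodule.span ℝ
      {curl2 (x ^ 3), curl2 (y ^ 3), curl2 (x ^ 2 * y), curl2 (x * y ^ 2),
        curl2 (x ^ 3 * y), curl2 (x * y ^ 3)}

theorem C_two : (C 2 : M2) = 2 := map_ofNat C 2

theorem mem_P1_iff (p : M2) (h : p ∈ restrictTotalDegree (Fin 2) ℝ 1) :
    ∃ a b c : ℝ, p = C a + C b * x + C c * y := by
  rw [mem_restrictTotalDegree] at h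
  refine ⟨coeff 0 p, coeff (Finsupp.single 0 1) p, coeff (Finsupp.single 1 1) p, ?_⟩
  ext s
  by_cases hs : s 0 + s 1 ≤ 1
  · have hcases : s = 0 ∨ s = Finsupp.single 0 1 ∨ s = Finsupp.single 1 1 := by
      have : (s 0 = 0 ∧ s 1 = 0) ∨ (s 0 = 1 ∧ s 1 = 0) ∨ (s 0 = 0 ∧ s 1 = 1) := by omega
      rcases this with h | h | h
      · left; ext i; fin_cases i <;> simp [h]
      · right; left; ext i; fin_cases i <;> simp [h]
      · right; right; ext i; fin_cases i <;> simp [h]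
    rcases hcases with rfl | rfl | rfl <;>
      simp [x, y, coeff_C, coeff_X, coeff_C_mul, Finsupp.single_left_inj, eq_comm]
  · have h0 : coeff s p = 0 := by
      apply coeff_eq_zero_of_totalDegree_lt
      have : ∑ i ∈ s.support, s i = s 0 + s 1 := by
        have := Finsupp.sum_fintype s (fun _ n => n) (by simp)
        simpa [Finsupp.sum] using this
      omega
    rw [h0]
    have e0 : (0 : Fin 2 →₀ ℕ) ≠ s := by rintro rfl; simp at hs
    have e1 : (Finsupp.single 0 1 : Fin 2 →₀ ℕ) ≠ s := by rintro rfl; simp at hs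
    have e2 : (Finsupp.single 1 1 : Fin 2 →₀ ℕ) ≠ s := by rintro rfl; simp at hs
    simp [x, y, coeff_C, coeff_X, coeff_C_mul, e0, e1, e2]

theorem lin_mem (a b c : ℝ) : C a + C b * x + C c * y ∈ restrictTotalDegree (Fin 2) ℝ 1 := by
  have hx : x ∈ restrictTotalDegree (Fin 2) ℝ 1 := by
    rw [mem_restrictTotalDegree]; simp [x]
  have hy : y ∈ restrictTotalDegree (Fin 2) ℝ 1 := by
    rw [mem_restrictTotalDegree]; simp [y]
  have h1 : C a ∈ restrictTotalDegree (Fin 2) ℝ 1 := by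
    rw [mem_restrictTotalDegree]; simp
  rw [← smul_eq_C_mul, ← smul_eq_C_mul]
  exact add_mem (add_mem h1 (Submodule.smul_mem _ _ hx)) (Submodule.smul_mem _ _ hy)

theorem mon_mem (i j : ℕ) (h : i + j ≤ 3) (c : ℝ) :
    C c * x ^ i * y ^ j ∈ restrictTotalDegree (Fin 2) ℝ 3 := by
  rw [mem_restrictTotalDegree]
  refine (totalDegree_mul _ _).trans ?_
  have h1 := totalDegree_mul (C c) (x ^ i)
  have h2 := totalDegree_pow x i
  have h3 := totalDegree_pow y j
  have h4 : totalDegree x = 1 := by simp [x]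
  have h5 : totalDegree y = 1 := by simp [y]
  rw [h4] at h2
  rw [h5] at h3
  rw [totalDegree_C] at h1
  omega

/-- The curl as a linear map. -/
def curlL : M2 →ₗ[ℝ] (Fin 2 → M2) where
  toFun := curl2
  map_add' f g := by ext1 i; fin_cases i <;> simp [curl2, add_comm]
  map_smul' r f := by ext1 i; fin_cases i <;> simp [curl2]

theorem curlL_apply (f : M2) : curlL f = curl2 f := rfl

theorem pair_mem (p q : M2) (hp : p ∈ restrictTotalDegree (Fin 2) ℝ 1)
    (hq : q ∈ restrictTotalDegree (Fin 2) ℝ 1) : ![p, q] ∈ Atilde := by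
  refine Submodule.mem_sup_left ?_
  rw [Submodule.mem_pi]
  intro i _
  fin_cases i
  · exact hp
  · exact hq

theorem mon_low (i j : ℕ) (c a b d a' b' d' : ℝ)
    (h0 : -(pderiv 1 (C c * x ^ i * y ^ j)) = C a + C b * x + C d * y)
    (h1 : pderiv 0 (C c * x ^ i * y ^ j) = C a' + C b' * x + C d' * y) :
    curl2 (C c * x ^ i * y ^ j) ∈ Atilde := by
  unfold curl2
  rw [h0, h1]
  exact pair_mem _ _ (lin_mem _ _ _) (lin_mem _ _ _)

theorem mon_high (c : ℝ) (f g : M2) (hg : g = C c * f)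
    (hf : curl2 f ∈ Atilde) : curl2 g ∈ Atilde := by
  rw [hg, ← smul_eq_C_mul, ← curlL_apply, map_smul]
  exact Submodule.smul_mem _ _ hf

theorem gen_mem (v : Fin 2 → M2) (h : v ∈ ({curl2 (x ^ 3), curl2 (y ^ 3), curl2 (x ^ 2 * y),
    curl2 (x * y ^ 2), curl2 (x ^ 3 * y), curl2 (x * y ^ 3)} : Set (Fin 2 → M2))) :
    v ∈ Atilde := Submodule.mem_sup_right (Submodule.subset_span h)

theorem curl_mon (i j : ℕ) (h : i + j ≤ 3) (c : ℝ) :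
    curl2 (C c * x ^ i * y ^ j) ∈ Atilde := by
  have hi : i ≤ 3 := by omega
  have hj : j ≤ 3 := by omega
  have d00 : pderiv 0 x = 1 := by simp [x]
  have d11 : pderiv 1 y = 1 := by simp [y]
  have d10 : pderiv 1 x = 0 := by simp [x, pderiv_X]
  have d01 : pderiv 0 y = 0 := by simp [y, pderiv_X]
  interval_cases i <;> interval_cases j <;> try omega
  · apply mon_low 0 0 c 0 0 0 0 0 0 <;> simp
  · apply mon_low 0 1 c (-c) 0 0 0 0 0 <;> simp [d00, d11, d10, d01, Derivation.leibniz]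
  · apply mon_low 0 2 c 0 0 (-2*c) 0 0 0 <;>
      simp [d00, d11, d10, d01, Derivation.leibniz, Derivation.leibniz_pow, C_two] <;> ring
  · exact mon_high c (y ^ 3) _ (by ring) (gen_mem _ (by simp))
  · apply mon_low 1 0 c 0 0 0 c 0 0 <;> simp [d00, d11, d10, d01, Derivation.leibniz]
  · apply mon_low 1 1 c 0 (-c) 0 0 0 c <;> simp [d00, d11, d10, d01, Derivation.leibniz] <;> ring
  · exact mon_high c (x * y ^ 2) _ (by ring) (gen_mem _ (by simp))
  · apply mon_low 2 0 c 0 0 0 0 (2*c) 0 <;>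
      simp [d00, d11, d10, d01, Derivation.leibniz, Derivation.leibniz_pow, C_two] <;> ring
  · exact mon_high c (x ^ 2 * y) _ (by ring) (gen_mem _ (by simp))
  · exact mon_high c (x ^ 3) _ (by ring) (gen_mem _ (by simp))

theorem curl_P3 (f : M2) (hf : f ∈ restrictTotalDegree (Fin 2) ℝ 3) : curlL f ∈ Atilde := by
  rw [mem_restrictTotalDegree] at hf
  rw [f.as_sum, map_sum]
  refine Submodule.sum_mem _ fun s hs => ?_
  have hd : s 0 + s 1 ≤ 3 := by
    have h1 := le_totalDegree hs
    have := Finsupp.sum_fintype s (fun _ n => n) (by simp)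
    rw [Fin.sum_univ_two] at this
    omega
  have hm : monomial s (coeff s f) = C (coeff s f) * x ^ s 0 * y ^ s 1 := by
    rw [monomial_eq, Finsupp.prod_fintype _ _ (by simp), Fin.prod_univ_two, mul_assoc]
    rfl
  rw [hm]
  exact curl_mon _ _ hd _

theorem A0_le : A0 ≤ Atilde.comap curlL := by
  refine sup_le (fun f hf => curl_P3 f hf) ?_
  rw [Submodule.span_le]
  rintro f (rfl | rfl)
  · exact gen_mem _ (by simp [curlL_apply])
  · exact gen_mem _ (by simp [curlL_apply])

theorem Atilde_le : Atilde ≤ A0.map curlL ⊔ Submodule.span ℝ {![x, y]} := by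
  have P : ∀ i j : ℕ, i + j ≤ 3 → ∀ c : ℝ, C c * x ^ i * y ^ j ∈ A0 :=
    fun i j h c => Submodule.mem_sup_left (mon_mem i j h c)
  have d00 : pderiv 0 x = 1 := by simp [x]
  have d11 : pderiv 1 y = 1 := by simp [y]
  have d10 : pderiv 1 x = 0 := by simp [x, pderiv_X]
  have d01 : pderiv 0 y = 0 := by simp [y, pderiv_X]
  refine sup_le ?_ ?_
  · intro u hu
    rw [Submodule.mem_pi] at hu
    obtain ⟨a, b, c, h0⟩ := mem_P1_iff _ (hu 0 (Set.mem_univ _))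
    obtain ⟨d, e, f, h1⟩ := mem_P1_iff _ (hu 1 (Set.mem_univ _))
    have hu' : u = curlL (C (-a) * x ^ 0 * y ^ 1 + C ((f - b) / 2) * x ^ 1 * y ^ 1
        + C (-c / 2) * x ^ 0 * y ^ 2 + C d * x ^ 1 * y ^ 0 + C (e / 2) * x ^ 2 * y ^ 0)
        + ((b + f) / 2) • ![x, y] := by
      have hb : C b = C ((b + f) / 2) - (C ((f - b) / 2) : M2) := by
        rw [← C_sub]; congr 1; ring
      have hf : C f = C ((b + f) / 2) + (C ((f - b) / 2) : M2) := by
        rw [← C_add]; congr 1; ring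
      have hc : (C c : M2) = - 2 * C (-c / 2) := by
        rw [show (-2 : M2) = C (-2) by rw [C_neg, C_two], ← C_mul]; congr 1; ring
      have he : (C e : M2) = 2 * C (e / 2) := by
        rw [show (2 : M2) = C 2 from C_two.symm, ← C_mul]; congr 1; ring
      rw [curlL_apply]
      ext1 i
      fin_cases i
      · change u 0 = _
        rw [h0, hb, hc]
        simp only [curl2, map_add, Derivation.leibniz, Derivation.leibniz_pow, d00, d11, d10, d01,
          pderiv_C, smul_eq_mul, smul_eq_C_mul, Pi.add_apply, Pi.smul_apply, Fin.zero_eta,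
          Matrix.cons_val_zero, C_neg]
        simp
        ring
      · change u 1 = _
        rw [h1, hf, he]
        simp only [curl2, map_add, Derivation.leibniz, Derivation.leibniz_pow, d00, d11, d10, d01,
          pderiv_C, smul_eq_mul, smul_eq_C_mul, Pi.add_apply, Pi.smul_apply, Fin.mk_one,
          Matrix.cons_val_one, C_neg]
        simp
        ring
    rw [hu']
    refine Submodule.add_mem_sup (Submodule.mem_map_of_mem ?_)
      (Submodule.smul_mem _ _ (Submodule.mem_span_singleton_self _))
    exact add_mem (add_mem (add_mem (add_mem (P _ _ (by norm_num) _) (P _ _ (by norm_num) _))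
      (P _ _ (by norm_num) _)) (P _ _ (by norm_num) _)) (P _ _ (by norm_num) _)
  · refine le_trans ?_ le_sup_left
    rw [Submodule.span_le]
    rintro v (rfl | rfl | rfl | rfl | rfl | rfl)
    · exact Submodule.mem_map_of_mem (f := curlL) (by simpa using P 3 0 (by norm_num) 1)
    · exact Submodule.mem_map_of_mem (f := curlL) (by simpa using P 0 3 (by norm_num) 1)
    · exact Submodule.mem_map_of_mem (f := curlL) (by simpa using P 2 1 (by norm_num) 1)
    · exact Submodule.mem_map_of_mem (f := curlL) (by simpa using P 1 2 (by norm_num) 1)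
    · exact Submodule.mem_map_of_mem (f := curlL)
        (Submodule.mem_sup_right (Submodule.subset_span (by simp)))
    · exact Submodule.mem_map_of_mem (f := curlL)
        (Submodule.mem_sup_right (Submodule.subset_span (by simp)))

/-- Poincaré–Koszul presentation of the reduced Adini 1-form space:
`Ã = curl A + span{(x, y)}`. -/
theorem reduced_adini_koszul_presentation :
    ∀ u : Fin 2 → M2,
      u ∈ Atilde ↔ ∃ φ ∈ A0, ∃ c : ℝ, u = curl2 φ + c • ![x, y] := by
  intro u
  constructor
  · intro hu
    obtain ⟨v, hv, w, hw, rfl⟩ := Submodule.mem_sup.1 (Atilde_le hu)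
    obtain ⟨φ, hφ, rfl⟩ := hv
    obtain ⟨c, rfl⟩ := Submodule.mem_span_singleton.1 hw
    exact ⟨φ, hφ, c, rfl⟩
  · rintro ⟨φ, hφ, c, rfl⟩
    refine add_mem (A0_le hφ) (Submodule.smul_mem _ _ (pair_mem _ _ ?_ ?_))
    · simpa using lin_mem 0 1 0
    · simpa using lin_mem 0 0 1

end
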